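/- Let α ∈ (0,2), β ∈ ℝ, and μ ∈ (απ/2, min(π, απ)). Then there exists a constant C > 0 such that for every z ∈ ℂ with z ≠ 0 and μ ≤ |arg z| ≤ π, one has |E_{α,β}(z)| ≤ C (1 + |z|)^{-1}. -/

import Mathlib

/-- The two-parameter Mittag-Leffler function `E_{α,β}(z) = ∑_{n=0}^∞ z^n / Γ(nα+β)`. -/
noncomputable def mittagLeffler (α β : ℝ) (z : ℂ) : ℂ :=
  ∑' n : ℕ, z ^ n / Complex.Gamma ((n : ℂ) * α + β)

open MeasureTheory Filter Topology

/-- On the critical line `Re s = 1/2`, the reciprocal Gamma function grows at most like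
`exp (π |Im s| / 2)`. -/
theorem norm_inv_Gamma_half_add_mul_I_le (y : ℝ) :
    ‖(Complex.Gamma (1 / 2 + y * Complex.I))⁻¹‖ ≤ Real.exp (Real.pi / 2 * |y|) := by
  set s : ℂ := 1 / 2 + y * Complex.I with hs
  have h1 : 1 - s = (starRingEnd ℂ) s := by
    apply Complex.ext <;> simp [hs]
    norm_num
  have h2 := Complex.Gamma_mul_Gamma_one_sub s
  have h3 : Complex.sin (Real.pi * s) = (Real.cosh (Real.pi * y) : ℝ) := by
    have : (Real.pi : ℂ) * s = (Real.pi * y : ℝ) * Complex.I + Real.pi / 2 := by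
      rw [hs]; push_cast; ring
    rw [this, Complex.sin_add_pi_div_two, Complex.cos_mul_I, Complex.ofReal_cosh]
  rw [h1, Complex.Gamma_conj, h3] at h2
  have h4 := congrArg (fun w : ℂ => ‖w‖) h2
  simp only [norm_mul, RCLike.norm_conj, norm_div, Complex.norm_real, Real.norm_eq_abs,
    abs_of_pos Real.pi_pos, abs_of_pos (Real.cosh_pos _)] at h4
  have hc := Real.cosh_pos (Real.pi * y)
  have hG : 0 < ‖Complex.Gamma s‖ := by
    rcases (norm_nonneg (Complex.Gamma s)).lt_or_eq with h | h
    · exact h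
    · rw [← h] at h4
      have : 0 < Real.pi / Real.cosh (Real.pi * y) := by positivity
      linarith
  have h5 : Real.cosh (Real.pi * y) ≤ Real.exp (Real.pi * |y|) := by
    rw [← Real.cosh_abs, abs_mul, abs_of_pos Real.pi_pos, Real.cosh_eq]
    have : Real.exp (-(Real.pi * |y|)) ≤ Real.exp (Real.pi * |y|) := by
      apply Real.exp_le_exp.2
      have : 0 ≤ Real.pi * |y| := by positivity
      linarith
    linarith
  rw [norm_inv]
  apply le_of_sq_le_sq _ (Real.exp_pos _).le
  rw [inv_pow, sq, sq, h4, ← Real.exp_add, inv_div, div_le_iff₀ Real.pi_pos]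
  have h6 : Real.pi / 2 * |y| + Real.pi / 2 * |y| = Real.pi * |y| := by ring
  rw [h6]
  nlinarith [Real.pi_gt_three, Real.exp_pos (Real.pi * |y|)]

/-- The beta integral at `(u, b)` is bounded by its value at `(Re u, b)`. -/
theorem norm_betaIntegral_le (u : ℂ) {a b : ℝ} (hu : 0 < u.re) (ha : a = u.re) (hb : 0 < b) :
    ‖Complex.betaIntegral u b‖ ≤ Real.Gamma a * Real.Gamma b / Real.Gamma (a + b) := by
  subst ha
  have h0 := Complex.betaIntegral_eq_Gamma_mul_div (u.re : ℂ) b (by simpa) (by simpa)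
  have hnorm : ∀ v : ℂ, ∀ x ∈ Set.Ioc (0 : ℝ) 1, x ≠ 1 →
      ‖(x : ℂ) ^ (v - 1) * (1 - (x : ℂ)) ^ ((b : ℂ) - 1)‖ =
        x ^ (v.re - 1) * (1 - x) ^ (b - 1) := by
    intro v x hx hx1
    have hx2 : 0 < 1 - x := by
      have := lt_of_le_of_ne hx.2 hx1
      linarith
    rw [norm_mul, Complex.norm_cpow_eq_rpow_re_of_pos hx.1,
      show (1 - (x : ℂ)) = ((1 - x : ℝ) : ℂ) by push_cast; rfl,
      Complex.norm_cpow_eq_rpow_re_of_pos hx2]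
    simp
  have hreal : Complex.betaIntegral (u.re : ℂ) b =
      ((∫ x in (0 : ℝ)..1, x ^ (u.re - 1) * (1 - x) ^ (b - 1) : ℝ) : ℂ) := by
    rw [Complex.betaIntegral, ← intervalIntegral.integral_ofReal]
    apply intervalIntegral.integral_congr
    intro x hx
    rw [Set.uIcc_of_le zero_le_one] at hx
    simp only
    rw [Complex.ofReal_mul, Complex.ofReal_cpow hx.1, Complex.ofReal_cpow (by linarith [hx.2])]
    push_cast
    rfl
  have hle : ‖Complex.betaIntegral u b‖ ≤
      ∫ x in (0 : ℝ)..1, x ^ (u.re - 1) * (1 - x) ^ (b - 1) := by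
    rw [Complex.betaIntegral]
    refine (intervalIntegral.norm_integral_le_integral_norm zero_le_one).trans (le_of_eq ?_)
    apply intervalIntegral.integral_congr_ae
    have : ∀ᵐ x : ℝ, x ≠ 1 := by simp [ae_iff]
    filter_upwards [this] with x hx hx2
    rw [Set.uIoc_of_le zero_le_one] at hx2
    exact hnorm u x hx2 hx
  have h1 : (∫ x in (0 : ℝ)..1, x ^ (u.re - 1) * (1 - x) ^ (b - 1) : ℝ) =
      Real.Gamma u.re * Real.Gamma b / Real.Gamma (u.re + b) := by
    rw [hreal, ← Complex.ofReal_add, Complex.Gamma_ofReal, Complex.Gamma_ofReal,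
      Complex.Gamma_ofReal] at h0
    exact_mod_cast h0
  rwa [h1] at hle

theorem norm_inv_Gamma_le {x : ℝ} (hx : 1 / 2 < x) (y : ℝ) :
    ‖(Complex.Gamma (x + y * Complex.I))⁻¹‖ ≤
      Real.Gamma (1 / 2) / Real.Gamma x * Real.exp (Real.pi / 2 * |y|) := by
  have hv : 0 < x - 1 / 2 := by linarith
  have h1 := Complex.Gamma_mul_Gamma_eq_betaIntegral
    (s := 1 / 2 + y * Complex.I) (t := ((x - 1 / 2 : ℝ) : ℂ)) (by simp) (by simpa using hv)
  rw [show (1 / 2 + y * Complex.I + ((x - 1 / 2 : ℝ) : ℂ)) = x + y * Complex.I by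
    push_cast; ring] at h1
  have h2 := norm_betaIntegral_le (1 / 2 + y * Complex.I) (a := 1 / 2) (by simp) (by simp) hv
  rw [show (1 / 2 + (x - 1 / 2) : ℝ) = x by ring] at h2
  have h3 := congrArg (fun w : ℂ => ‖w‖) h1
  simp only [norm_mul, Complex.Gamma_ofReal, Complex.norm_real, Real.norm_eq_abs] at h3
  have hGv := Real.Gamma_pos_of_pos hv
  have hGx := Real.Gamma_pos_of_pos (show 0 < x by linarith)
  have hGh := Real.Gamma_pos_of_pos (show (0 : ℝ) < 1 / 2 by norm_num)
  rw [abs_of_pos hGv] at h3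
  have hne : Complex.Gamma (x + y * Complex.I) ≠ 0 :=
    Complex.Gamma_ne_zero_of_re_pos (by simp; linarith)
  have hne' : Complex.Gamma (1 / 2 + y * Complex.I) ≠ 0 :=
    Complex.Gamma_ne_zero_of_re_pos (by simp)
  have hp := norm_pos_iff.2 hne
  have hp' := norm_pos_iff.2 hne'
  have h4 := norm_inv_Gamma_half_add_mul_I_le y
  rw [norm_inv] at h4 ⊢
  have h5 : ‖Complex.Gamma (1 / 2 + y * Complex.I)‖ ≤
      ‖Complex.Gamma (x + y * Complex.I)‖ * (Real.Gamma (1 / 2) / Real.Gamma x) := by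
    have : ‖Complex.Gamma (1 / 2 + y * Complex.I)‖ * Real.Gamma (x - 1 / 2) ≤
        ‖Complex.Gamma (x + y * Complex.I)‖ * (Real.Gamma (1 / 2) / Real.Gamma x)
          * Real.Gamma (x - 1 / 2) := by
      rw [h3]
      refine (mul_le_mul_of_nonneg_left h2 hp.le).trans (le_of_eq ?_)
      ring
    exact le_of_mul_le_mul_right this hGv
  calc ‖Complex.Gamma (x + y * Complex.I)‖⁻¹
      ≤ Real.Gamma (1 / 2) / Real.Gamma x * ‖Complex.Gamma (1 / 2 + y * Complex.I)‖⁻¹ := by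
        rw [← div_eq_mul_inv, inv_eq_one_div, div_le_div_iff₀ hp hp', one_mul]
        exact h5.trans (le_of_eq (mul_comm _ _))
    _ ≤ _ := by gcongr

/-- In every vertical strip, the reciprocal Gamma function grows at most like `exp (c |Im s|)`,
for every `c > π / 2`. -/
theorem exists_norm_inv_Gamma_le_of_mem_strip (a b c : ℝ) (hc : Real.pi / 2 < c) :
    ∃ A, ∀ x ∈ Set.Icc a b, ∀ y : ℝ,
      ‖(Complex.Gamma (x + y * Complex.I))⁻¹‖ ≤ A * Real.exp (c * |y|) := by
  suffices H : ∀ k : ℕ, ∀ a b c : ℝ, Real.pi / 2 < c → 1 / 2 - k < a →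
      ∃ A, ∀ x ∈ Set.Icc a b, ∀ y : ℝ,
      ‖(Complex.Gamma (x + y * Complex.I))⁻¹‖ ≤ A * Real.exp (c * |y|) by
    obtain ⟨k, hk⟩ := exists_nat_gt (1 / 2 - a)
    exact H k a b c hc (by linarith)
  intro k
  induction k with
  | zero =>
    intro a b c hc ha
    simp only [CharP.cast_eq_zero, sub_zero] at ha
    have hcont : ContinuousOn (fun x : ℝ => Real.Gamma (1 / 2) / Real.Gamma x) (Set.Icc a b) := by
      intro x hx
      have hx0 : 0 < x := by linarith [hx.1]
      apply ContinuousAt.continuousWithinAt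
      apply ContinuousAt.div continuousAt_const
      · exact (Real.differentiableAt_Gamma fun m => by
          have : (0 : ℝ) ≤ m := m.cast_nonneg
          linarith).continuousAt
      · exact (Real.Gamma_pos_of_pos hx0).ne'
    obtain ⟨A, hA⟩ := isCompact_Icc.exists_bound_of_continuousOn hcont
    refine ⟨A, fun x hx y => (norm_inv_Gamma_le (by linarith [hx.1]) y).trans ?_⟩
    have h1 := (le_abs_self _).trans (hA x hx)
    have hA0 : 0 ≤ A := (norm_nonneg _).trans (hA x hx)
    gcongr
  | succ k ih =>
    intro a b c hc ha
    push_cast at ha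
    obtain ⟨A, hA⟩ := ih (a + 1) (b + 1) ((c + Real.pi / 2) / 2) (by linarith) (by linarith)
    set ε := (c - Real.pi / 2) / 2 with hε
    have hε0 : 0 < ε := by rw [hε]; linarith
    set M := max |a| |b|
    refine ⟨(M + 1 / ε) * A, fun x hx y => ?_⟩
    have h1 := hA (x + 1) ⟨by linarith [hx.1], by linarith [hx.2]⟩ y
    have hA0 : 0 ≤ A := by
      have := (norm_nonneg _).trans h1
      exact nonneg_of_mul_nonneg_left this (Real.exp_pos _)
    have h2 := Complex.one_div_Gamma_eq_self_mul_one_div_Gamma_add_one (x + y * Complex.I)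
    rw [show (x + y * Complex.I + 1 : ℂ) = ((x + 1 : ℝ) : ℂ) + y * Complex.I by
      push_cast; ring] at h2
    rw [h2, norm_mul]
    have h3 : ‖(x + y * Complex.I : ℂ)‖ ≤ (M + 1 / ε) * Real.exp (ε * |y|) := by
      have hx' : |x| ≤ M := abs_le_max_abs_abs hx.1 hx.2
      have h4 : ‖(x + y * Complex.I : ℂ)‖ ≤ |x| + |y| := by
        refine (norm_add_le _ _).trans (le_of_eq ?_)
        simp
      have h5 := Real.add_one_le_exp (ε * |y|)
      have h6 : 1 ≤ Real.exp (ε * |y|) := Real.one_le_exp (by positivity)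
      have h7 : |y| ≤ 1 / ε * Real.exp (ε * |y|) := by
        rw [one_div, ← div_eq_inv_mul, le_div_iff₀ hε0]
        linarith
      have h8 : 0 ≤ M := (abs_nonneg _).trans hx'
      nlinarith
    calc _ ≤ ((M + 1 / ε) * Real.exp (ε * |y|)) *
          (A * Real.exp ((c + Real.pi / 2) / 2 * |y|)) := by gcongr
      _ = (M + 1 / ε) * A * (Real.exp (ε * |y|) * Real.exp ((c + Real.pi / 2) / 2 * |y|)) := by
        ring
      _ = _ := by
        rw [← Real.exp_add]
        congr 2
        rw [hε]; ring

theorem integrable_exp_neg_mul_abs {c : ℝ} (hc : 0 < c) :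
    Integrable (fun t : ℝ => Real.exp (-c * |t|)) := by
  refine (integrable_inv_one_add_sq.const_mul (1 + 2 / c ^ 2)).mono' (by fun_prop)
    (ae_of_all _ fun t => ?_)
  rw [Real.norm_eq_abs, Real.abs_exp, neg_mul, Real.exp_neg, ← div_eq_mul_inv, inv_eq_one_div,
    div_le_div_iff₀ (Real.exp_pos _) (by positivity), one_mul]
  have h1 := Real.quadratic_le_exp_of_nonneg (show 0 ≤ c * |t| by positivity)
  have h2 : 0 ≤ c * |t| := by positivity
  have h3 : t ^ 2 ≤ 2 / c ^ 2 * Real.exp (c * |t|) := by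
    have : t ^ 2 = 2 / c ^ 2 * ((c * |t|) ^ 2 / 2) := by
      rw [mul_pow, sq_abs]; field_simp
    rw [this]
    gcongr
    linarith
  have h4 : 1 ≤ Real.exp (c * |t|) := Real.one_le_exp h2
  linarith

theorem exp_pi_mul_abs_im_le_norm_sin {s : ℂ} (hs : 1 ≤ |s.im|) :
    Real.exp (Real.pi * |s.im|) / 4 ≤ ‖Complex.sin (Real.pi * s)‖ := by
  have key : ∀ w : ℂ, 1 ≤ w.im →
      Real.exp (Real.pi * w.im) / 4 ≤ ‖Complex.sin (Real.pi * w)‖ := by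
    intro w hw
    rw [Complex.sin, norm_div, norm_mul, Complex.norm_I, mul_one, Complex.norm_two]
    have h1 := norm_sub_norm_le (Complex.exp (-(Real.pi * w) * Complex.I))
      (Complex.exp (Real.pi * w * Complex.I))
    rw [Complex.norm_exp, Complex.norm_exp] at h1
    rw [neg_mul] at h1 ⊢
    simp only [Complex.neg_re, Complex.mul_re, Complex.ofReal_re, Complex.ofReal_im,
      Complex.I_re, Complex.I_im, Complex.mul_im, zero_mul, mul_zero, sub_zero, mul_one, zero_sub,
      add_zero, neg_neg] at h1
    have h2 : Real.exp (-(Real.pi * w.im)) ≤ 1 :=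
      Real.exp_le_one_iff.2 (by nlinarith [Real.pi_pos])
    have h3 : Real.pi * w.im + 1 ≤ Real.exp (Real.pi * w.im) := Real.add_one_le_exp _
    have h4 : 3 ≤ Real.pi * w.im := by nlinarith [Real.pi_gt_three]
    linarith
  rcases le_total 0 s.im with h | h
  · rw [abs_of_nonneg h] at hs ⊢
    exact key s hs
  · rw [abs_of_nonpos h] at hs ⊢
    have := key (-s) (by simpa using hs)
    simpa using this

theorem exp_pi_mul_abs_le_two_mul_cosh (t : ℝ) :
    Real.exp (Real.pi * |t|) ≤ 2 * Real.cosh (Real.pi * t) := by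
  rw [← Real.cosh_abs, abs_mul, abs_of_pos Real.pi_pos, Real.cosh_eq]
  linarith [Real.exp_pos (-(Real.pi * |t|))]

theorem norm_div_cosh_le {A b t : ℝ} {w : ℂ} (hw : ‖w‖ ≤ A * Real.exp (b * |t|)) :
    ‖w / (Real.cosh (Real.pi * t) : ℂ)‖ ≤ 2 * A * Real.exp (-(Real.pi - b) * |t|) := by
  have hc := Real.cosh_pos (Real.pi * t)
  rw [norm_div, Complex.norm_real, Real.norm_eq_abs, abs_of_pos hc, div_le_iff₀ hc]
  refine hw.trans ?_
  have h1 : Real.exp (b * |t|) = Real.exp (-(Real.pi - b) * |t|) * Real.exp (Real.pi * |t|) := by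
    rw [← Real.exp_add]; ring_nf
  have hA : 0 ≤ A := nonneg_of_mul_nonneg_left ((norm_nonneg _).trans hw) (Real.exp_pos _)
  rw [h1, ← mul_assoc]
  calc _ ≤ A * Real.exp (-(Real.pi - b) * |t|) * (2 * Real.cosh (Real.pi * t)) := by
        gcongr
        exact exp_pi_mul_abs_le_two_mul_cosh t
    _ = _ := by ring

theorem integrable_div_cosh {f : ℝ → ℂ} (hf : Continuous f) {A b : ℝ} (hb : b < Real.pi)
    (hbd : ∀ t, ‖f t‖ ≤ A * Real.exp (b * |t|)) :
    Integrable (fun t : ℝ => f t / (Real.cosh (Real.pi * t) : ℂ)) := by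
  refine ((integrable_exp_neg_mul_abs (sub_pos.2 hb)).const_mul (2 * A)).mono' ?_
    (ae_of_all _ fun t => norm_div_cosh_le (hbd t))
  apply Continuous.aestronglyMeasurable
  refine hf.div (by fun_prop) fun t => ?_
  exact_mod_cast (Real.cosh_pos _).ne'

theorem integral_inv_quarter_add_sq : ∫ t : ℝ, (1 / 4 + t ^ 2)⁻¹ = 2 * Real.pi := by
  have h : ∀ t : ℝ, (1 / 4 + t ^ 2)⁻¹ = 4 * (1 + (2 * t) ^ 2)⁻¹ := fun t => by
    have : 1 / 4 + t ^ 2 ≠ 0 := by positivity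
    have : 1 + (2 * t) ^ 2 ≠ 0 := by positivity
    field_simp
    ring
  simp_rw [h]
  rw [integral_const_mul, Measure.integral_comp_mul_left (fun t : ℝ => (1 + t ^ 2)⁻¹),
    integral_univ_inv_one_add_sq]
  simp only [abs_inv, Nat.abs_ofNat, smul_eq_mul]
  ring

theorem integrable_inv_quarter_add_sq : Integrable (fun t : ℝ => (1 / 4 + t ^ 2)⁻¹) := by
  by_contra h
  have := integral_inv_quarter_add_sq
  rw [integral_undef h] at this
  linarith [Real.pi_pos]

/-- There is an entire function without zeros in the strip `|Re s| < 1` which agrees with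
`sin (π s) / s` away from `0`. -/
theorem exists_differentiable_sin_pi_mul_eq_mul :
    ∃ q : ℂ → ℂ, Differentiable ℂ q ∧ (∀ s, Complex.sin (Real.pi * s) = s * q s) ∧
      q 0 = Real.pi ∧ ∀ s : ℂ, |s.re| < 1 → q s ≠ 0 := by
  have hd : Differentiable ℂ fun s : ℂ => Complex.sin (Real.pi * s) := by fun_prop
  have h1 : ∀ s, Complex.sin (Real.pi * s) =
      s * dslope (fun s : ℂ => Complex.sin (Real.pi * s)) 0 s := fun s => by
    have := sub_smul_dslope (fun s : ℂ => Complex.sin (Real.pi * s)) 0 s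
    simpa using this.symm
  have h0 : dslope (fun s : ℂ => Complex.sin (Real.pi * s)) 0 0 = Real.pi := by
    rw [dslope_same]
    have : HasDerivAt (fun s : ℂ => Complex.sin (Real.pi * s))
        (Complex.cos (Real.pi * 0) * (Real.pi * 1)) 0 :=
      ((hasDerivAt_id (0 : ℂ)).const_mul (Real.pi : ℂ)).csin
    simpa using this.deriv
  refine ⟨dslope (fun s : ℂ => Complex.sin (Real.pi * s)) 0, ?_, h1, h0, ?_⟩
  · rw [← differentiableOn_univ, Complex.differentiableOn_dslope univ_mem]
    exact hd.differentiableOn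
  · intro s hs hq
    by_cases hs0 : s = 0
    · rw [hs0, h0] at hq
      exact Real.pi_ne_zero (by exact_mod_cast hq)
    · have h2 := h1 s
      rw [hq, mul_zero, Complex.sin_eq_zero_iff] at h2
      obtain ⟨k, hk⟩ := h2
      rw [mul_comm] at hk
      have hk' : s = k := mul_right_cancel₀ (by exact_mod_cast Real.pi_ne_zero) hk
      rw [hk', Complex.intCast_re] at hs
      have hk0 : k = 0 := Int.abs_lt_one_iff.1 (by exact_mod_cast hs)
      exact hs0 (by rw [hk', hk0, Int.cast_zero])

/-- The residue theorem for `F s * π / sin (π s)` on the strip `|Re s| ≤ 1 / 2`. -/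
theorem integral_div_cosh_eq_two_mul {F : ℂ → ℂ} (hF : Differentiable ℂ F) {A b : ℝ}
    (hb : b < Real.pi)
    (hbd : ∀ s : ℂ, |s.re| ≤ 1 / 2 → ‖F s‖ ≤ A * Real.exp (b * |s.im|)) :
    (∫ t : ℝ, F (1 / 2 + t * Complex.I) / (Real.cosh (Real.pi * t) : ℂ)) +
      (∫ t : ℝ, F (-1 / 2 + t * Complex.I) / (Real.cosh (Real.pi * t) : ℂ)) = 2 * F 0 := by
  obtain ⟨q, hqd, hq, hq0, hqne⟩ := exists_differentiable_sin_pi_mul_eq_mul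
  set U : Set ℂ := {s : ℂ | |s.re| < 1} with hU
  have hUo : IsOpen U := isOpen_lt (by fun_prop) continuous_const
  set G := dslope (fun s => F s * Real.pi / q s) 0 with hG
  have hGd : DifferentiableOn ℂ G U := by
    rw [hG, Complex.differentiableOn_dslope (hUo.mem_nhds (by simp [hU]))]
    exact (hF.differentiableOn.mul_const _).div hqd.differentiableOn fun s hs => hqne s hs
  have hpi : (Real.pi : ℂ) ≠ 0 := by exact_mod_cast Real.pi_ne_zero
  have hGne : ∀ s : ℂ, s ≠ 0 → G s = F s * Real.pi / Complex.sin (Real.pi * s) - F 0 / s := by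
    intro s hs
    rw [hG, dslope_of_ne _ hs, slope_def_field, hq, hq0, sub_zero, mul_div_cancel_right₀ _ hpi,
      sub_div, div_div, mul_comm s]
  have hG_right : ∀ t : ℝ, G (1 / 2 + t * Complex.I) - G (-1 / 2 + t * Complex.I) =
      Real.pi * (F (1 / 2 + t * Complex.I) / (Real.cosh (Real.pi * t) : ℂ)) +
      Real.pi * (F (-1 / 2 + t * Complex.I) / (Real.cosh (Real.pi * t) : ℂ)) -
      F 0 * ((1 / 4 + t ^ 2)⁻¹ : ℝ) := by
    intro t
    have hs1 : (1 / 2 + t * Complex.I : ℂ) ≠ 0 := fun h => by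
      have := congrArg Complex.re h
      simp at this
    have hs2 : (-1 / 2 + t * Complex.I : ℂ) ≠ 0 := fun h => by
      have := congrArg Complex.re h
      simp at this
    have e1 : Complex.sin (Real.pi * (1 / 2 + t * Complex.I)) = (Real.cosh (Real.pi * t) : ℂ) := by
      rw [show (Real.pi * (1 / 2 + t * Complex.I) : ℂ) = (Real.pi * t : ℝ) * Complex.I + Real.pi / 2
        by push_cast; ring, Complex.sin_add_pi_div_two, Complex.cos_mul_I, Complex.ofReal_cosh]
    have e2 : Complex.sin (Real.pi * (-1 / 2 + t * Complex.I)) =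
        -(Real.cosh (Real.pi * t) : ℂ) := by
      rw [show (Real.pi * (-1 / 2 + t * Complex.I) : ℂ) =
        (Real.pi * t : ℝ) * Complex.I - Real.pi / 2
        by push_cast; ring, Complex.sin_sub_pi_div_two, Complex.cos_mul_I, Complex.ofReal_cosh]
    rw [hGne _ hs1, hGne _ hs2, e1, e2]
    have hsum : (1 / 2 + t * Complex.I : ℂ)⁻¹ - (-1 / 2 + t * Complex.I : ℂ)⁻¹ =
        ((1 / 4 + t ^ 2)⁻¹ : ℝ) := by
      have hr : (1 / 4 + (t : ℂ) ^ 2) ≠ 0 := by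
        have h : (1 / 4 + t ^ 2 : ℝ) ≠ 0 := by positivity
        have := Complex.ofReal_ne_zero.2 h
        push_cast at this
        exact this
      have hprod : (1 / 2 + t * Complex.I : ℂ) * (-1 / 2 + t * Complex.I) =
          -(1 / 4 + (t : ℂ) ^ 2) := by
        ring_nf; rw [Complex.I_sq]; ring
      rw [inv_sub_inv hs1 hs2, hprod]
      push_cast
      rw [div_eq_iff (neg_ne_zero.2 hr), mul_neg, inv_mul_cancel₀ hr]
      ring
    rw [← hsum]
    ring
  have hre1 : ∀ t : ℝ, (1 / 2 + t * Complex.I : ℂ).re = 1 / 2 := fun t => by simp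
  have hre2 : ∀ t : ℝ, (-1 / 2 + t * Complex.I : ℂ).re = -1 / 2 := fun t => by simp
  have him1 : ∀ t : ℝ, (1 / 2 + t * Complex.I : ℂ).im = t := fun t => by simp
  have him2 : ∀ t : ℝ, (-1 / 2 + t * Complex.I : ℂ).im = t := fun t => by simp
  have hi1 := integrable_div_cosh (f := fun t : ℝ => F (1 / 2 + t * Complex.I))
    (hF.continuous.comp (by fun_prop)) hb fun t => by
      simpa only [him1] using hbd (1 / 2 + t * Complex.I) (by rw [hre1]; norm_num)
  have hi2 := integrable_div_cosh (f := fun t : ℝ => F (-1 / 2 + t * Complex.I))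
    (hF.continuous.comp (by fun_prop)) hb fun t => by
      simpa only [him2] using hbd (-1 / 2 + t * Complex.I) (by rw [hre2]; norm_num)
  have hi3 : Integrable (fun t : ℝ => F 0 * ((1 / 4 + t ^ 2)⁻¹ : ℝ)) :=
    integrable_inv_quarter_add_sq.ofReal.const_mul _
  have h_int := ((hi1.const_mul (Real.pi : ℂ)).add (hi2.const_mul (Real.pi : ℂ))).sub hi3
  have hlim := intervalIntegral_tendsto_integral h_int tendsto_neg_atTop_atBot tendsto_id
  have hrect : ∀ T : ℝ, 1 ≤ T → ‖∫ t in (-T)..T, (G (1 / 2 + t * Complex.I) -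
      G (-1 / 2 + t * Complex.I))‖ ≤
      2 * (4 * A * Real.pi * Real.exp (-((Real.pi - b) * T)) + ‖F 0‖ * T⁻¹) := by
    intro T hT
    have hsub : (Set.uIcc (-1 / 2 : ℝ) (1 / 2) ×ℂ Set.uIcc (-T) T) ⊆ U := by
      intro s hs
      have := hs.1
      rw [Set.mem_preimage, Set.uIcc_of_le (by norm_num)] at this
      simp only [hU, Set.mem_ofPred_eq, abs_lt]
      constructor <;> linarith [this.1, this.2]
    have hR := Complex.integral_boundary_rect_eq_zero_of_differentiableOn G
      ⟨-1 / 2, -T⟩ ⟨1 / 2, T⟩ (hGd.mono hsub)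
    simp only at hR
    have hvert : ∀ c : ℝ, |c| < 1 →
        IntervalIntegrable (fun t : ℝ => G (c + t * Complex.I)) volume (-T) T := by
      intro c hc
      apply Continuous.intervalIntegrable
      rw [← continuousOn_univ]
      exact hGd.continuousOn.comp (by fun_prop) fun t _ => by simpa [hU] using hc
    have hh : ∀ S : ℝ, |S| = T → ‖∫ x in (-1 / 2 : ℝ)..(1 / 2), G (x + S * Complex.I)‖ ≤
        4 * A * Real.pi * Real.exp (-((Real.pi - b) * T)) + ‖F 0‖ * T⁻¹ := by
      intro S hS
      have : ∀ x ∈ Set.uIoc (-1 / 2 : ℝ) (1 / 2), ‖G (x + S * Complex.I)‖ ≤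
          4 * A * Real.pi * Real.exp (-((Real.pi - b) * T)) + ‖F 0‖ * T⁻¹ := by
        intro x hx
        rw [Set.uIoc_of_le (by norm_num)] at hx
        set s : ℂ := x + S * Complex.I with hs
        have hsre : s.re = x := by simp [hs]
        have hsim : s.im = S := by simp [hs]
        have hs0 : s ≠ 0 := fun h => by
          rw [h, Complex.zero_im] at hsim
          rw [← hsim, abs_zero] at hS
          linarith
        rw [hGne s hs0]
        refine (norm_sub_le _ _).trans (add_le_add ?_ ?_)
        · have hsin := exp_pi_mul_abs_im_le_norm_sin (s := s) (by rw [hsim, hS]; exact hT)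
          have hFs := hbd s (by rw [hsre, abs_le]; constructor <;> linarith [hx.1, hx.2])
          rw [hsim, hS] at hsin hFs
          have hpos : 0 < Real.exp (Real.pi * T) / 4 := by positivity
          have hA : 0 ≤ A :=
            nonneg_of_mul_nonneg_left ((norm_nonneg _).trans hFs) (Real.exp_pos _)
          rw [norm_div, norm_mul, Complex.norm_real, Real.norm_eq_abs, abs_of_pos Real.pi_pos,
            div_le_iff₀ (hpos.trans_le hsin)]
          calc ‖F s‖ * Real.pi ≤ A * Real.exp (b * T) * Real.pi := by
                gcongr
            _ = 4 * A * Real.pi * Real.exp (-((Real.pi - b) * T)) *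
                (Real.exp (Real.pi * T) / 4) := by
                rw [show b * T = -((Real.pi - b) * T) + Real.pi * T by ring, Real.exp_add]
                ring
            _ ≤ _ := by gcongr
        · rw [norm_div, div_eq_mul_inv]
          have : T ≤ ‖s‖ := by
            rw [← hS, ← hsim]
            exact Complex.abs_im_le_norm s
          gcongr
      refine (intervalIntegral.norm_integral_le_of_norm_le_const this).trans (le_of_eq ?_)
      norm_num
    have hv1 := hvert (1 / 2) (by norm_num [abs_lt])
    have hv2 := hvert (-1 / 2) (by norm_num [abs_lt])
    push_cast at hv1 hv2 hR
    rw [intervalIntegral.integral_sub hv1 hv2]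
    have b1 := hh (-T) (by rw [abs_neg, abs_of_pos]; linarith)
    have b2 := hh T (by rw [abs_of_pos]; linarith)
    push_cast at b1 b2
    simp only [smul_eq_mul] at hR
    set V1 := ∫ t in (-T)..T, G (1 / 2 + t * Complex.I)
    set V2 := ∫ t in (-T)..T, G (-1 / 2 + t * Complex.I)
    set H1 := ∫ x in (-1 / 2 : ℝ)..(1 / 2), G (x + -T * Complex.I)
    set H2 := ∫ x in (-1 / 2 : ℝ)..(1 / 2), G (x + T * Complex.I)
    have : ‖V1 - V2‖ = ‖H2 - H1‖ := by
      have e : Complex.I * (V1 - V2) = H2 - H1 := by linear_combination hR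
      rw [← e, norm_mul, Complex.norm_I, one_mul]
    rw [this]
    refine (norm_sub_le _ _).trans ?_
    linarith
  have hzero : Tendsto (fun T : ℝ => ∫ t in (-T)..T, (G (1 / 2 + t * Complex.I) -
      G (-1 / 2 + t * Complex.I))) atTop (𝓝 0) := by
    have hlim0 : Tendsto (fun T : ℝ =>
        2 * (4 * A * Real.pi * Real.exp (-((Real.pi - b) * T)) + ‖F 0‖ * T⁻¹))
        atTop (𝓝 (2 * (4 * A * Real.pi * 0 + ‖F 0‖ * 0))) := by
      refine ((Tendsto.const_mul _ ?_).add (tendsto_inv_atTop_zero.const_mul _)).const_mul _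
      exact Real.tendsto_exp_neg_atTop_nhds_zero.comp
        (tendsto_id.const_mul_atTop (sub_pos.2 hb))
    rw [show 2 * (4 * A * Real.pi * 0 + ‖F 0‖ * 0) = 0 by ring] at hlim0
    refine squeeze_zero_norm' ?_ hlim0
    filter_upwards [eventually_ge_atTop 1] with T hT using hrect T hT
  have huniq := tendsto_nhds_unique hzero (hlim.congr fun T => by
    apply intervalIntegral.integral_congr
    intro t _
    simp only [Pi.add_apply, Pi.sub_apply]
    exact (hG_right t).symm)
  rw [integral_sub' ((hi1.const_mul _).add (hi2.const_mul _)) hi3,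
    integral_add' (hi1.const_mul _) (hi2.const_mul _), integral_const_mul, integral_const_mul,
    integral_const_mul, integral_complex_ofReal, integral_inv_quarter_add_sq] at huniq
  apply mul_left_cancel₀ hpi
  rw [Complex.ofReal_mul, Complex.ofReal_ofNat] at huniq
  linear_combination -huniq

theorem rpow_mul_exp_neg_le_Gamma {M y : ℝ} (hM : 0 < M) (hy : 1 ≤ y) :
    M ^ (y - 1) * Real.exp (-M) ≤ Real.Gamma y := by
  have hi := Real.GammaIntegral_convergent (show 0 < y by linarith)
  have hsub : Set.Ioi M ⊆ Set.Ioi 0 := Set.Ioi_subset_Ioi hM.le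
  rw [Real.Gamma_eq_integral (by linarith), ← integral_exp_neg_Ioi, ← integral_const_mul]
  calc ∫ x in Set.Ioi M, M ^ (y - 1) * Real.exp (-x)
      ≤ ∫ x in Set.Ioi M, Real.exp (-x) * x ^ (y - 1) := by
        refine setIntegral_mono_on ((integrableOn_exp_neg_Ioi M).const_mul _)
          (hi.mono_set hsub) measurableSet_Ioi fun x hx => ?_
        rw [mul_comm]
        gcongr
        exact (Set.mem_Ioi.1 hx).le
    _ ≤ _ := by
        refine setIntegral_mono_set hi ?_ hsub.eventuallyLE
        filter_upwards [ae_restrict_mem measurableSet_Ioi] with x hx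
        have : 0 < x := hx
        simp only [Pi.zero_apply]
        positivity

theorem exists_exp_mul_div_Gamma_le {α : ℝ} (hα : 0 < α) (β r : ℝ) :
    ∃ C, ∀ x : ℝ, 1 ≤ α * x + β → 0 ≤ x →
      Real.exp (x * r) / Real.Gamma (α * x + β) ≤ C * Real.exp (-x) := by
  set p := (r + 1) / α with hp
  refine ⟨Real.exp (Real.exp p - p * (β - 1)), fun x hx hx0 => ?_⟩
  have h1 := rpow_mul_exp_neg_le_Gamma (Real.exp_pos p) hx
  rw [← Real.exp_mul, ← Real.exp_add] at h1
  rw [div_le_iff₀ (Real.Gamma_pos_of_pos (by linarith))]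
  refine le_trans ?_ (mul_le_mul_of_nonneg_left h1 (by positivity))
  rw [← Real.exp_add, ← Real.exp_add]
  apply Real.exp_le_exp.2
  have : p * α = r + 1 := by rw [hp]; field_simp
  apply le_of_eq
  linear_combination -x * this

theorem summable_norm_mittagLeffler {α : ℝ} (hα : 0 < α) (β : ℝ) (z : ℂ) :
    Summable fun n : ℕ => ‖z ^ n / Complex.Gamma ((n : ℂ) * α + β)‖ := by
  obtain ⟨C, hC⟩ := exists_exp_mul_div_Gamma_le hα β (Real.log (‖z‖ + 1))
  have hg : Summable fun n : ℕ => C * Real.exp (-n) :=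
    Real.summable_exp_neg_nat.mul_left C
  refine Summable.of_norm_bounded_eventually_nat hg ?_
  have hlim : Tendsto (fun n : ℕ => α * (n : ℝ) + β) atTop atTop :=
    tendsto_atTop_add_const_right _ _ (tendsto_natCast_atTop_atTop.const_mul_atTop hα)
  filter_upwards [hlim.eventually_ge_atTop 1] with n hn
  rw [norm_norm, norm_div, norm_pow,
    show ((n : ℂ) * α + β) = ((α * n + β : ℝ) : ℂ) by push_cast; ring, Complex.Gamma_ofReal,
    Complex.norm_real, Real.norm_eq_abs, abs_of_pos (Real.Gamma_pos_of_pos (by linarith))]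
  refine le_trans ?_ (hC n hn n.cast_nonneg)
  rw [mul_comm (n : ℝ), Real.exp_mul, Real.exp_log (by positivity), Real.rpow_natCast]
  have := Real.Gamma_pos_of_pos (show 0 < α * n + β by linarith)
  gcongr
  linarith

/-- The entire function interpolating `n ↦ (-z) ^ n / Γ(nα+β)`, where `L` is a logarithm
of `-z`. -/
noncomputable def mittagLefflerInterp (α β : ℝ) (L s : ℂ) : ℂ :=
  Complex.exp (s * L) * (Complex.Gamma (α * s + β))⁻¹

/-- The Mellin–Barnes integral of the Mittag-Leffler function along the line `Re s = x`. -/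
noncomputable def mittagLefflerLineIntegral (α β : ℝ) (L : ℂ) (x : ℝ) : ℂ :=
  ∫ t : ℝ, mittagLefflerInterp α β L (x + t * Complex.I) / (Real.cosh (Real.pi * t) : ℂ)

theorem differentiable_mittagLefflerInterp (α β : ℝ) (L : ℂ) :
    Differentiable ℂ (mittagLefflerInterp α β L) := by
  unfold mittagLefflerInterp
  refine Differentiable.mul (by fun_prop) ?_
  exact Complex.differentiable_one_div_Gamma.comp (by fun_prop)

theorem norm_mittagLefflerInterp_le {α β B c x t ν : ℝ} {L : ℂ} (hα : 0 ≤ α) (hL : |L.im| ≤ ν)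
    (h : ‖(Complex.Gamma ((α * x + β : ℝ) + (α * t : ℝ) * Complex.I))⁻¹‖ ≤
      B * Real.exp (c * |α * t|)) :
    ‖mittagLefflerInterp α β L (x + t * Complex.I)‖ ≤
      Real.exp (x * L.re) * B * Real.exp ((c * α + ν) * |t|) := by
  have h1 : (α * (x + t * Complex.I) + β : ℂ) =
      ((α * x + β : ℝ) + (α * t : ℝ) * Complex.I) := by push_cast; ring
  have h2 : ((x + t * Complex.I) * L).re = x * L.re - t * L.im := by simp
  have h3 : -(t * L.im) ≤ ν * |t| := by
    refine (neg_le_abs _).trans ?_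
    rw [abs_mul, mul_comm]
    gcongr
  rw [mittagLefflerInterp, norm_mul, h1, Complex.norm_exp, h2]
  calc _ ≤ Real.exp (x * L.re + ν * |t|) * (B * Real.exp (c * |α * t|)) := by
        gcongr
        linarith
    _ = _ := by
        rw [abs_mul, abs_of_nonneg hα, Real.exp_add,
          show (c * α + ν) * |t| = ν * |t| + c * (α * |t|) by ring, Real.exp_add]
        ring

theorem norm_mittagLefflerLineIntegral_le {α β B b x : ℝ} {L : ℂ} (hb : b < Real.pi)
    (h : ∀ t : ℝ, ‖mittagLefflerInterp α β L (x + t * Complex.I)‖ ≤ B * Real.exp (b * |t|)) :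
    ‖mittagLefflerLineIntegral α β L x‖ ≤
      2 * B * ∫ t : ℝ, Real.exp (-(Real.pi - b) * |t|) := by
  rw [← integral_const_mul]
  exact norm_integral_le_of_norm_le
    ((integrable_exp_neg_mul_abs (sub_pos.2 hb)).const_mul (2 * B))
    (ae_of_all _ fun t => norm_div_cosh_le (h t))

theorem mittagLefflerLineIntegral_add {α β ν : ℝ} {L : ℂ} (hα : 0 < α) (hL : |L.im| ≤ ν)
    (hν : Real.pi / 2 * α + ν < Real.pi) (n : ℝ) :
    mittagLefflerLineIntegral α β L (n + 1 / 2) + mittagLefflerLineIntegral α β L (n - 1 / 2) =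
      2 * mittagLefflerInterp α β L n := by
  obtain ⟨c, hc, hcα⟩ : ∃ c, Real.pi / 2 < c ∧ c * α + ν < Real.pi := by
    obtain ⟨c, hc1, hc2⟩ := exists_between
      (show Real.pi / 2 < (Real.pi - ν) / α by rw [lt_div_iff₀ hα]; linarith)
    rw [lt_div_iff₀ hα] at hc2
    exact ⟨c, hc1, by linarith⟩
  obtain ⟨A, hA⟩ := exists_norm_inv_Gamma_le_of_mem_strip (α * (n - 1 / 2) + β)
    (α * (n + 1 / 2) + β) c hc
  have hA0 : 0 ≤ A := by
    have := (norm_nonneg _).trans (hA (α * n + β) ⟨by nlinarith, by nlinarith⟩ 0)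
    exact nonneg_of_mul_nonneg_left this (Real.exp_pos _)
  have key := integral_div_cosh_eq_two_mul
    (F := fun s => mittagLefflerInterp α β L (s + n))
    ((differentiable_mittagLefflerInterp α β L).comp (by fun_prop))
    (A := Real.exp ((|n| + 1 / 2) * |L.re|) * A) hcα ?_
  · simp only [zero_add] at key
    rw [← key, mittagLefflerLineIntegral, mittagLefflerLineIntegral]
    congr 2 <;> funext t <;> congr 2 <;> push_cast <;> ring
  · intro s hs
    have hs' := abs_le.1 hs
    have e : s + n = ((s.re + n : ℝ) : ℂ) + s.im * Complex.I := by
      apply Complex.ext <;> simp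
    rw [e]
    refine (norm_mittagLefflerInterp_le hα.le hL
      (hA (α * (s.re + n) + β) ⟨by nlinarith, by nlinarith⟩ _)).trans ?_
    have h1 : (s.re + n) * L.re ≤ (|n| + 1 / 2) * |L.re| := by
      refine (le_abs_self _).trans ?_
      rw [abs_mul]
      gcongr
      have := abs_add_le s.re n
      linarith
    gcongr

theorem tendsto_mittagLefflerLineIntegral {α β ν : ℝ} {L : ℂ} (hα : 0 < α) (hL : |L.im| ≤ ν)
    (hν : Real.pi / 2 * α + ν < Real.pi) :
    Tendsto (mittagLefflerLineIntegral α β L) atTop (𝓝 0) := by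
  obtain ⟨C, hC⟩ := exists_exp_mul_div_Gamma_le hα β L.re
  set I := ∫ t : ℝ, Real.exp (-(Real.pi - (Real.pi / 2 * α + ν)) * |t|)
  have hI : 0 ≤ I := integral_nonneg fun t => (Real.exp_pos _).le
  have hlim : Tendsto (fun x : ℝ => 2 * (Real.Gamma (1 / 2) * (C * Real.exp (-x))) * I) atTop
      (𝓝 (2 * (Real.Gamma (1 / 2) * (C * 0)) * I)) :=
    (((Real.tendsto_exp_neg_atTop_nhds_zero.const_mul C).const_mul _).const_mul 2).mul_const I
  rw [show 2 * (Real.Gamma (1 / 2) * (C * 0)) * I = 0 by ring] at hlim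
  refine squeeze_zero_norm' ?_ hlim
  have hlin : Tendsto (fun x : ℝ => α * x + β) atTop atTop :=
    tendsto_atTop_add_const_right _ _ (tendsto_id.const_mul_atTop hα)
  filter_upwards [hlin.eventually_ge_atTop 1, eventually_ge_atTop 0] with x hx hx0
  have h1 := norm_mittagLefflerLineIntegral_le hν fun t =>
    norm_mittagLefflerInterp_le hα.le hL (norm_inv_Gamma_le (x := α * x + β) (by linarith) (α * t))
  refine h1.trans ?_
  have h2 := hC x hx hx0
  have hG := Real.Gamma_pos_of_pos (show (0 : ℝ) < 1 / 2 by norm_num)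
  gcongr 2 * ?_ * I
  calc _ = Real.Gamma (1 / 2) * (Real.exp (x * L.re) / Real.Gamma (α * x + β)) := by ring
    _ ≤ _ := by gcongr

/-- Shifting the line of integration in the Mellin–Barnes representation past `s = -1`. -/
theorem two_mul_mittagLeffler_eq {α β ν : ℝ} {L z : ℂ} (hα : 0 < α) (hL : |L.im| ≤ ν)
    (hν : Real.pi / 2 * α + ν < Real.pi) (hz : Complex.exp L = -z) :
    2 * mittagLeffler α β z = 2 * mittagLefflerInterp α β L (-1) -
      mittagLefflerLineIntegral α β L (-3 / 2) := by
  set J := mittagLefflerLineIntegral α β L with hJ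
  have hterm : ∀ n : ℕ, z ^ n / Complex.Gamma ((n : ℂ) * α + β) =
      (-1) ^ n * mittagLefflerInterp α β L n := by
    intro n
    rw [mittagLefflerInterp, Complex.exp_nat_mul, hz, ← mul_assoc, ← mul_pow, div_eq_mul_inv,
      mul_comm (n : ℂ)]
    ring_nf
  have hsum : ∀ N : ℕ, 2 * ∑ n ∈ Finset.range N, z ^ n / Complex.Gamma ((n : ℂ) * α + β) =
      2 * mittagLefflerInterp α β L (-1) - J (-3 / 2) - (-1) ^ N * J (N - 1 / 2) := by
    intro N
    induction N with
    | zero =>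
      have h := mittagLefflerLineIntegral_add (β := β) hα hL hν (-1)
      rw [← hJ, show (-1 + 1 / 2 : ℝ) = -1 / 2 by norm_num,
        show (-1 - 1 / 2 : ℝ) = -3 / 2 by norm_num] at h
      push_cast at h
      simp only [Finset.range_zero, Finset.sum_empty, pow_zero, CharP.cast_eq_zero]
      rw [show (0 - 1 / 2 : ℝ) = -1 / 2 by norm_num]
      linear_combination h
    | succ N ih =>
      have h := mittagLefflerLineIntegral_add (β := β) hα hL hν N
      rw [← hJ] at h
      rw [Finset.sum_range_succ, mul_add, ih, hterm]
      push_cast at h ⊢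
      rw [show (N + 1 - 1 / 2 : ℝ) = N + 1 / 2 by ring, pow_succ]
      linear_combination -(-1) ^ N * h
  have hS := ((summable_norm_mittagLeffler hα β z).of_norm.hasSum.tendsto_sum_nat).const_mul 2
  have hJ0 : Tendsto (fun N : ℕ => (-1 : ℂ) ^ N * J (N - 1 / 2)) atTop (𝓝 0) := by
    rw [tendsto_zero_iff_norm_tendsto_zero]
    simp only [norm_mul, norm_pow, norm_neg, norm_one, one_pow, one_mul]
    rw [← tendsto_zero_iff_norm_tendsto_zero]
    exact (tendsto_mittagLefflerLineIntegral hα hL hν).comp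
      (tendsto_atTop_add_const_right _ _ tendsto_natCast_atTop_atTop)
  have hS' := (tendsto_const_nhds (x := 2 * mittagLefflerInterp α β L (-1) - J (-3 / 2))).sub hJ0
  rw [sub_zero] at hS'
  exact tendsto_nhds_unique hS (hS'.congr fun N => (hsum N).symm)

theorem exists_exp_eq_neg_of_le_abs_arg {z : ℂ} {μ : ℝ} (hz : z ≠ 0) (hμ : μ ≤ |z.arg|) :
    ∃ L : ℂ, Complex.exp L = -z ∧ L.re = Real.log ‖z‖ ∧ |L.im| ≤ Real.pi - μ := by
  rcases le_total 0 z.arg with h | h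
  · refine ⟨Complex.log z - Real.pi * Complex.I, ?_, by simp [Complex.log_re], ?_⟩
    · rw [Complex.exp_sub, Complex.exp_log hz, Complex.exp_pi_mul_I, div_neg, div_one]
    · rw [abs_of_nonneg h] at hμ
      have := z.arg_le_pi
      simp only [Complex.sub_im, Complex.log_im, Complex.mul_im, Complex.ofReal_re,
        Complex.ofReal_im, Complex.I_re, Complex.I_im, mul_one, mul_zero, add_zero]
      rw [abs_le]
      constructor <;> linarith
  · refine ⟨Complex.log z + Real.pi * Complex.I, ?_, by simp [Complex.log_re], ?_⟩
    · rw [Complex.exp_add, Complex.exp_log hz, Complex.exp_pi_mul_I, mul_neg, mul_one]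
    · rw [abs_of_nonpos h] at hμ
      have := z.neg_pi_lt_arg
      simp only [Complex.add_im, Complex.log_im, Complex.mul_im, Complex.ofReal_re,
        Complex.ofReal_im, Complex.I_re, Complex.I_im, mul_one, mul_zero, add_zero]
      rw [abs_le]
      constructor <;> linarith

theorem norm_mittagLeffler_le_of_norm_le_one {α : ℝ} (hα : 0 < α) (β : ℝ) {z : ℂ}
    (hz : ‖z‖ ≤ 1) :
    ‖mittagLeffler α β z‖ ≤ ∑' n : ℕ, ‖(1 : ℂ) ^ n / Complex.Gamma ((n : ℂ) * α + β)‖ := by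
  refine tsum_of_norm_bounded (summable_norm_mittagLeffler hα β 1).hasSum fun n => ?_
  rw [norm_div, norm_div, norm_pow, one_pow, norm_one]
  gcongr
  exact pow_le_one₀ (norm_nonneg _) hz

theorem exists_norm_mittagLeffler_le_of_one_le_norm {α μ : ℝ} (β : ℝ) (hα : 0 < α)
    (hμ : α * Real.pi / 2 < μ) :
    ∃ C, 0 ≤ C ∧ ∀ z : ℂ, 1 ≤ ‖z‖ → μ ≤ |z.arg| → ‖mittagLeffler α β z‖ ≤ C * ‖z‖⁻¹ := by
  obtain ⟨c, hc, hcα⟩ : ∃ c, Real.pi / 2 < c ∧ c * α + (Real.pi - μ) < Real.pi := by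
    obtain ⟨c, hc1, hc2⟩ := exists_between
      (show Real.pi / 2 < μ / α by rw [lt_div_iff₀ hα]; linarith)
    rw [lt_div_iff₀ hα] at hc2
    exact ⟨c, hc1, by linarith⟩
  obtain ⟨A, hA⟩ := exists_norm_inv_Gamma_le_of_mem_strip (α * (-3 / 2) + β)
    (α * (-3 / 2) + β) c hc
  have hA0 : 0 ≤ A :=
    nonneg_of_mul_nonneg_left ((norm_nonneg _).trans (hA _ ⟨le_rfl, le_rfl⟩ 0)) (Real.exp_pos _)
  set I := ∫ t : ℝ, Real.exp (-(Real.pi - (c * α + (Real.pi - μ))) * |t|)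
  have hI : 0 ≤ I := integral_nonneg fun t => (Real.exp_pos _).le
  refine ⟨‖(Complex.Gamma (α * (-1) + β))⁻¹‖ + A * I, by positivity, fun z hz hzμ => ?_⟩
  have hz0 : z ≠ 0 := norm_pos_iff.1 (by linarith)
  obtain ⟨L, hL, hLre, hLim⟩ := exists_exp_eq_neg_of_le_abs_arg hz0 hzμ
  have hrep := two_mul_mittagLeffler_eq (β := β) hα hLim (by linarith) hL
  have hlog : 0 ≤ Real.log ‖z‖ := Real.log_nonneg hz
  have hexp : Real.exp (-Real.log ‖z‖) = ‖z‖⁻¹ := by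
    rw [Real.exp_neg, Real.exp_log (by linarith)]
  have h1 : ‖mittagLefflerInterp α β L (-1)‖ = ‖(Complex.Gamma (α * (-1) + β))⁻¹‖ * ‖z‖⁻¹ := by
    rw [mittagLefflerInterp, norm_mul, Complex.norm_exp, neg_one_mul, Complex.neg_re, hLre, hexp,
      mul_comm]
  have h2 : ‖mittagLefflerLineIntegral α β L (-3 / 2)‖ ≤ 2 * (‖z‖⁻¹ * A) * I := by
    refine norm_mittagLefflerLineIntegral_le hcα fun t => ?_
    refine (norm_mittagLefflerInterp_le hα.le hLim (hA _ ⟨le_rfl, le_rfl⟩ _)).trans ?_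
    gcongr
    rw [← hexp, hLre]
    apply Real.exp_le_exp.2
    linarith
  have h3 : ‖(2 : ℂ) * mittagLeffler α β z‖ ≤
      2 * ‖mittagLefflerInterp α β L (-1)‖ + ‖mittagLefflerLineIntegral α β L (-3 / 2)‖ := by
    rw [hrep]
    refine (norm_sub_le _ _).trans (le_of_eq ?_)
    rw [norm_mul, Complex.norm_two]
  rw [norm_mul, Complex.norm_two, h1] at h3
  linarith

/-- For `α ∈ (0,2)`, `β ∈ ℝ` and `μ ∈ (απ/2, min(π, απ))`, there is `C > 0` such that
`|E_{α,β}(z)| ≤ C (1+|z|)⁻¹` on the sector `μ ≤ |arg z| ≤ π`. -/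
theorem mittagLeffler_decay_sector (α β μ : ℝ) (hα : α ∈ Set.Ioo (0:ℝ) 2)
    (hμ : μ ∈ Set.Ioo (α * Real.pi / 2) (min Real.pi (α * Real.pi))) :
    ∃ C > 0, ∀ z : ℂ, z ≠ 0 → μ ≤ |z.arg| → |z.arg| ≤ Real.pi →
      ‖mittagLeffler α β z‖ ≤ C * (1 + ‖z‖)⁻¹ := by
  obtain ⟨C, hC0, hC⟩ := exists_norm_mittagLeffler_le_of_one_le_norm β hα.1 hμ.1
  set D := ∑' n : ℕ, ‖(1 : ℂ) ^ n / Complex.Gamma ((n : ℂ) * α + β)‖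
  have hD : 0 ≤ D := tsum_nonneg fun n => norm_nonneg _
  refine ⟨2 * (C + D + 1), by positivity, fun z _ hz _ => ?_⟩
  rw [← div_eq_mul_inv, le_div_iff₀ (by positivity)]
  rcases le_total ‖z‖ 1 with h | h
  · have := norm_mittagLeffler_le_of_norm_le_one hα.1 β h
    calc _ ≤ D * (1 + 1) := by gcongr
      _ ≤ _ := by linarith
  · have h1 := hC z h hz
    have h0 : 0 < ‖z‖ := by linarith
    calc _ ≤ C * ‖z‖⁻¹ * (‖z‖ + ‖z‖) := by gcongr
      _ = 2 * C := by field_simp; ring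
      _ ≤ _ := by linarith
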